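/- Fix T ∈ (0,∞). On Ω_T = Ω × (0,T) with measure μ_T = μ ⊗ (Lebesgue measure on (0,T)), consider the lifted flow Ψ((x,t),s) = (Φ(x,s), t+s), the exit times ℓ+(x,t) = min(τ+(x), T−t) and ℓ−(x,t) = min(τ−(x), t), and the sets Σ±,T = { ζ ∈ ∂Ω_T : ∃ ξ ∈ Ω_T with ζ = Ψ(ξ, ±ℓ±(ξ)) }. Then there exist unique positive Borel measures ν− on Σ−,T and ν+ on Σ+,T such that μ_T = ν− ⊗ ds = ν+ ⊗ ds; explicitly, for every Borel set E ⊆ Σ−,T and every Borel set I ⊆ (0,∞) such that s < ℓ+(ξ) for all ξ ∈ E and s ∈ I, one has μ_T({ Ψ(ξ,s) : ξ ∈ E, s ∈ I }) = ν−(E) · leb(I), and symmetrically, for every Borel E ⊆ Σ+,T and Borel I ⊆ (0,∞) with s < ℓ−(ξ) for all ξ ∈ E, s ∈ I, μ_T({ Ψ(ξ,−s) : ξ ∈ E, s ∈ I }) = ν+(E) · leb(I). -/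

import Mathlib

/-!
The lifted flow `Ψ = lflow Φ` preserves `μ ⊗ leb`, and every point of `Ω_T = Ω × (0,T)` enters
and leaves `Ω_T` in finite time because its second coordinate moves at unit speed. Everything
else holds for any measure-preserving continuous flow `θ` and any open set `O` with finite exit
times `a` (backward) and `b` (forward), which is the setting `Transit` below; the outgoing case
is the incoming case for the reversed flow.

Let `e z = θ z (-a z)` be the entrance point of `z ∈ O` and `L = a + b` the length of its
trajectory segment in `O`; both are constant along the segment. The boundary measure is
`ν(E) = ∫_{O ∩ {e ∈ E}} 1 / L dm`. To see that `m {e ∈ E, a ∈ I} = ν(E) · leb(I)`, insert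
`1 = (1 / L) ∫ 1[-a < σ < b] dσ` under the integral, exchange the integrals, and replace `z` by
`θ z (-σ)` using invariance. Since `a (θ z (-σ)) = a z - σ`, the inner integral over `σ` becomes
`∫ 1_I(a z - σ) dσ = leb(I)` (`Transit.shift_iff`, `Transit.swept_measure`). This identity in
`[0,∞]` needs no finiteness of `ν`, only that `m` is s-finite.

For uniqueness, the entrance boundary is the increasing union of the Borel sets of points whose
forward trajectory stays in `O` on `(0, 1/(n+1)]`; testing with `I = (0, 1/(n+1)]` determines the
measure on the Borel subsets of each of these.

For the concrete flow, the group law is ODE uniqueness and joint continuity is Grönwall.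
-/

open MeasureTheory Set Filter Topology
open scoped ENNReal NNReal

noncomputable section

/-- Forward exit time of the flow `Φ` from `Ω` (`∞` if the forward curve never leaves `Ω`). -/
def tauP {N : ℕ} (Ω : Set (Fin N → ℝ)) (Φ : (Fin N → ℝ) → ℝ → (Fin N → ℝ))
    (x : Fin N → ℝ) : ℝ≥0∞ :=
  sInf {s : ℝ≥0∞ | ∃ r : ℝ, 0 < r ∧ s = ENNReal.ofReal r ∧ Φ x r ∉ Ω}

/-- Backward exit time of the flow `Φ` from `Ω`. -/
def tauM {N : ℕ} (Ω : Set (Fin N → ℝ)) (Φ : (Fin N → ℝ) → ℝ → (Fin N → ℝ))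
    (x : Fin N → ℝ) : ℝ≥0∞ :=
  sInf {s : ℝ≥0∞ | ∃ r : ℝ, 0 < r ∧ s = ENNReal.ofReal r ∧ Φ x (-r) ∉ Ω}

/-- `∫_0^τ g(s) ds`, over `(0,∞)` when `τ = ∞`. -/
def curveInt (g : ℝ → ℝ) (τ : ℝ≥0∞) : ℝ :=
  ∫ s in {s : ℝ | 0 < s ∧ ENNReal.ofReal s < τ}, g s

/-- The incoming part `Γ₋` of the boundary `∂Ω`. -/
def GammaM {N : ℕ} (Ω : Set (Fin N → ℝ)) (Φ : (Fin N → ℝ) → ℝ → (Fin N → ℝ)) :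
    Set (Fin N → ℝ) :=
  {y ∈ frontier Ω | ∃ x ∈ Ω, tauM Ω Φ x < ⊤ ∧ y = Φ x (-(tauM Ω Φ x).toReal)}

/-- The outgoing part `Γ₊` of the boundary `∂Ω`. -/
def GammaP {N : ℕ} (Ω : Set (Fin N → ℝ)) (Φ : (Fin N → ℝ) → ℝ → (Fin N → ℝ)) :
    Set (Fin N → ℝ) :=
  {y ∈ frontier Ω | ∃ x ∈ Ω, tauP Ω Φ x < ⊤ ∧ y = Φ x ((tauP Ω Φ x).toReal)}

/-- The boundary measures `μ∓` satisfy the integration-along-characteristics identities. -/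
def IsBoundaryMeasures {N : ℕ} (Ω : Set (Fin N → ℝ)) (Φ : (Fin N → ℝ) → ℝ → (Fin N → ℝ))
    (μ μm μp : Measure (Fin N → ℝ)) : Prop :=
  ∀ f : (Fin N → ℝ) → ℝ, Integrable f (μ.restrict Ω) →
    (∫ x in {x ∈ Ω | tauM Ω Φ x < ⊤}, f x ∂μ
        = ∫ y in GammaM Ω Φ, curveInt (fun s => f (Φ y s)) (tauP Ω Φ y) ∂μm) ∧
    (∫ x in {x ∈ Ω | tauP Ω Φ x < ⊤}, f x ∂μ
        = ∫ y in GammaP Ω Φ, curveInt (fun s => f (Φ y (-s))) (tauM Ω Φ y) ∂μp)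

/-- The identities of Lemma `defmu+-` (beals1 and beals2). -/
def BealsProperty {N : ℕ} (Ω : Set (Fin N → ℝ)) (Φ : (Fin N → ℝ) → ℝ → (Fin N → ℝ))
    (μ μm μp : Measure (Fin N → ℝ)) : Prop :=
  ∀ T : ℝ, 0 < T → ∀ f : ((Fin N → ℝ) × ℝ) → ℝ,
    Integrable f ((μ.restrict Ω).prod (volume.restrict (Ioo (0 : ℝ) T))) →
    (∫ p, f p ∂((μ.restrict Ω).prod (volume.restrict (Ioo (0 : ℝ) T)))
        = (∫ t in Ioo (0 : ℝ) T, (∫ y in GammaP Ω Φ,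
            (∫ s in Ioo (0 : ℝ) ((tauM Ω Φ y ⊓ ENNReal.ofReal t).toReal),
              f (Φ y (-s), t - s)) ∂μp))
          + ∫ x in Ω, (∫ s in Ioo (0 : ℝ) ((tauM Ω Φ x ⊓ ENNReal.ofReal T).toReal),
              f (Φ x (-s), T - s)) ∂μ)
    ∧ (∫ p, f p ∂((μ.restrict Ω).prod (volume.restrict (Ioo (0 : ℝ) T)))
        = (∫ t in Ioo (0 : ℝ) T, (∫ y in GammaM Ω Φ,
            (∫ s in Ioo (0 : ℝ) ((tauP Ω Φ y ⊓ ENNReal.ofReal (T - t)).toReal),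
              f (Φ y s, t + s)) ∂μm))
          + ∫ x in Ω, (∫ s in Ioo (0 : ℝ) ((tauP Ω Φ x ⊓ ENNReal.ofReal T).toReal),
              f (Φ x s, s)) ∂μ)

/-- The class `𝔜` of test functions, together with the derivative `Dψ` along the flow. -/
structure IsTestFun {N : ℕ} (Ω : Set (Fin N → ℝ)) (Φ : (Fin N → ℝ) → ℝ → (Fin N → ℝ))
    (ψ Dψ : (Fin N → ℝ) → ℝ) : Prop where
  measurable : Measurable ψ
  bounded : ∃ C, ∀ x, |ψ x| ≤ C
  compact_support : ∃ K : Set (Fin N → ℝ), IsCompact K ∧ K ⊆ Ω ∧ ∀ x ∉ K, ψ x = 0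
  smooth : ∀ x ∈ Ω, ContDiffOn ℝ 1 (fun s => ψ (Φ x s))
      {s : ℝ | ENNReal.ofReal s < tauP Ω Φ x ∧ ENNReal.ofReal (-s) < tauM Ω Φ x}
  hasDeriv : ∀ x ∈ Ω, HasDerivAt (fun s => ψ (Φ x s)) (Dψ x) 0
  measurableD : Measurable Dψ
  boundedD : ∃ C, ∀ x, |Dψ x| ≤ C

/-- `f ∈ D(T_max)` with `T_max f = g`. -/
def InDomTmax {N : ℕ} (Ω : Set (Fin N → ℝ)) (Φ : (Fin N → ℝ) → ℝ → (Fin N → ℝ))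
    (μ : Measure (Fin N → ℝ)) (f g : (Fin N → ℝ) → ℝ) : Prop :=
  Integrable f (μ.restrict Ω) ∧ Integrable g (μ.restrict Ω) ∧
    ∀ ψ Dψ : (Fin N → ℝ) → ℝ, IsTestFun Ω Φ ψ Dψ →
      ∫ x in Ω, g x * ψ x ∂μ = ∫ x in Ω, f x * Dψ x ∂μ

/-- A sequence of one-dimensional mollifiers supported in `[0, 1/n]`. -/
def IsMollifier (ρ : ℕ → ℝ → ℝ) : Prop :=
  ∀ n : ℕ, ContDiff ℝ (⊤ : ℕ∞) (ρ n) ∧ (∀ s, 0 ≤ ρ n s) ∧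
    (∀ s, s ∉ Icc (0 : ℝ) (1 / (n + 1 : ℝ)) → ρ n s = 0) ∧ (∫ s, ρ n s) = 1

/-- Mollification along the characteristic curves. -/
def moll {N : ℕ} (Ω : Set (Fin N → ℝ)) (Φ : (Fin N → ℝ) → ℝ → (Fin N → ℝ))
    (ρ : ℝ → ℝ) (f : (Fin N → ℝ) → ℝ) (x : Fin N → ℝ) : ℝ :=
  curveInt (fun s => ρ s * f (Φ x (-s))) (tauM Ω Φ x)

/-- The lifted flow `Ψ(ξ,s) = (Φ(ξ₁,s), ξ₂+s)` on `Ω × (0,T)`. -/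
def lflow {N : ℕ} (Φ : (Fin N → ℝ) → ℝ → (Fin N → ℝ)) (ξ : (Fin N → ℝ) × ℝ) (s : ℝ) :
    (Fin N → ℝ) × ℝ := (Φ ξ.1 s, ξ.2 + s)

/-- Forward exit time `ℓ₊` of the lifted flow. -/
def ellP {N : ℕ} (Ω : Set (Fin N → ℝ)) (Φ : (Fin N → ℝ) → ℝ → (Fin N → ℝ)) (T : ℝ)
    (ξ : (Fin N → ℝ) × ℝ) : ℝ≥0∞ := tauP Ω Φ ξ.1 ⊓ ENNReal.ofReal (T - ξ.2)

/-- Backward exit time `ℓ₋` of the lifted flow. -/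
def ellM {N : ℕ} (Ω : Set (Fin N → ℝ)) (Φ : (Fin N → ℝ) → ℝ → (Fin N → ℝ))
    (ξ : (Fin N → ℝ) × ℝ) : ℝ≥0∞ := tauM Ω Φ ξ.1 ⊓ ENNReal.ofReal ξ.2

/-- The incoming part `Σ₋,T` of the boundary of `Ω × (0,T)`. -/
def SigmaM {N : ℕ} (Ω : Set (Fin N → ℝ)) (Φ : (Fin N → ℝ) → ℝ → (Fin N → ℝ)) (T : ℝ) :
    Set ((Fin N → ℝ) × ℝ) :=
  {ζ ∈ frontier (Ω ×ˢ Ioo (0 : ℝ) T) |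
    ∃ ξ ∈ Ω ×ˢ Ioo (0 : ℝ) T, ζ = lflow Φ ξ (-(ellM Ω Φ ξ).toReal)}

/-- The outgoing part `Σ₊,T` of the boundary of `Ω × (0,T)`. -/
def SigmaP {N : ℕ} (Ω : Set (Fin N → ℝ)) (Φ : (Fin N → ℝ) → ℝ → (Fin N → ℝ)) (T : ℝ) :
    Set ((Fin N → ℝ) × ℝ) :=
  {ζ ∈ frontier (Ω ×ˢ Ioo (0 : ℝ) T) |
    ∃ ξ ∈ Ω ×ˢ Ioo (0 : ℝ) T, ζ = lflow Φ ξ ((ellP Ω Φ T ξ).toReal)}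

/-- The semigroup `U₀(t)` with no re-entry boundary conditions. -/
def U0 {N : ℕ} (Ω : Set (Fin N → ℝ)) (Φ : (Fin N → ℝ) → ℝ → (Fin N → ℝ)) (t : ℝ)
    (f : (Fin N → ℝ) → ℝ) (x : Fin N → ℝ) : ℝ :=
  if ENNReal.ofReal t < tauM Ω Φ x then f (Φ x (-t)) else 0

/-- `x ↦ ∫_0^{τ₋(x)} e^{-λ t} g(Φ(x,-t)) dt`. -/
def resolv {N : ℕ} (Ω : Set (Fin N → ℝ)) (Φ : (Fin N → ℝ) → ℝ → (Fin N → ℝ)) (lam : ℝ)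
    (g : (Fin N → ℝ) → ℝ) (x : Fin N → ℝ) : ℝ :=
  curveInt (fun t => Real.exp (-(lam * t)) * g (Φ x (-t))) (tauM Ω Φ x)

/-- The candidate solution of the boundary value problem `(λ - T_max) f = g`, `B⁻ f = u`. -/
def bvpSol {N : ℕ} (Ω : Set (Fin N → ℝ)) (Φ : (Fin N → ℝ) → ℝ → (Fin N → ℝ)) (lam : ℝ)
    (g u : (Fin N → ℝ) → ℝ) (x : Fin N → ℝ) : ℝ :=
  resolv Ω Φ lam g x +
    (if tauM Ω Φ x < ⊤ then
      Real.exp (-(lam * (tauM Ω Φ x).toReal)) * u (Φ x (-(tauM Ω Φ x).toReal)) else 0)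

/-- `f` has incoming trace `u` on `Γ₋`, via an absolutely continuous representative
(along the characteristics, with derivative `-g`). -/
def IsTraceM {N : ℕ} (Ω : Set (Fin N → ℝ)) (Φ : (Fin N → ℝ) → ℝ → (Fin N → ℝ))
    (μ μm : Measure (Fin N → ℝ)) (f g u : (Fin N → ℝ) → ℝ) : Prop :=
  ∃ fs : (Fin N → ℝ) → ℝ, fs =ᵐ[μ.restrict Ω] f ∧
    (∀ᵐ x ∂μ.restrict Ω, ∀ t₁ t₂ : ℝ, t₁ ≤ t₂ →
      ENNReal.ofReal (-t₁) < tauM Ω Φ x → ENNReal.ofReal t₂ < tauP Ω Φ x →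
      fs (Φ x t₁) - fs (Φ x t₂) = ∫ s in t₁..t₂, g (Φ x s)) ∧
    ∀ᵐ y ∂μm.restrict (GammaM Ω Φ),
      Tendsto (fun t => fs (Φ y t)) (𝓝[>] (0 : ℝ)) (𝓝 (u y))

/-- `f` has outgoing trace `w` on `Γ₊`. -/
def IsTraceP {N : ℕ} (Ω : Set (Fin N → ℝ)) (Φ : (Fin N → ℝ) → ℝ → (Fin N → ℝ))
    (μ μp : Measure (Fin N → ℝ)) (f g w : (Fin N → ℝ) → ℝ) : Prop :=
  ∃ fs : (Fin N → ℝ) → ℝ, fs =ᵐ[μ.restrict Ω] f ∧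
    (∀ᵐ x ∂μ.restrict Ω, ∀ t₁ t₂ : ℝ, t₁ ≤ t₂ →
      ENNReal.ofReal (-t₁) < tauM Ω Φ x → ENNReal.ofReal t₂ < tauP Ω Φ x →
      fs (Φ x t₁) - fs (Φ x t₂) = ∫ s in t₁..t₂, g (Φ x s)) ∧
    ∀ᵐ y ∂μp.restrict (GammaP Ω Φ),
      Tendsto (fun t => fs (Φ y (-t))) (𝓝[>] (0 : ℝ)) (𝓝 (w y))

/-! ### Measure-preserving flows crossing an open set -/

/-- A measure-preserving continuous flow `θ` on `Z` together with an open set `O` which every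
trajectory starting in `O` leaves in both time directions: `a z` and `b z` are the backward and
forward exit times of `z ∈ O`, as finite real numbers, and both vanish off `O`. -/
structure Transit {Z : Type*} [TopologicalSpace Z] [MeasurableSpace Z]
    (θ : Z → ℝ → Z) (m : Measure Z) (O : Set Z) (a b : Z → ℝ) : Prop where
  cont : Continuous (fun p : Z × ℝ => θ p.1 p.2)
  zero : ∀ z, θ z 0 = z
  add : ∀ z s t, θ (θ z s) t = θ z (s + t)
  pres : ∀ s, MeasurePreserving (fun z => θ z s) m m
  isOpen : IsOpen O
  a_nonneg : ∀ z, 0 ≤ a z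
  b_nonneg : ∀ z, 0 ≤ b z
  lt_a : ∀ z s, 0 ≤ s → (s < a z ↔ ∀ r ∈ Icc 0 s, θ z (-r) ∈ O)
  lt_b : ∀ z s, 0 ≤ s → (s < b z ↔ ∀ r ∈ Icc 0 s, θ z r ∈ O)

namespace Transit

section

variable {Z : Type*} [TopologicalSpace Z] [MeasurableSpace Z]
  {θ : Z → ℝ → Z} {m : Measure Z} {O : Set Z} {a b : Z → ℝ}

lemma reverse (h : Transit θ m O a b) : Transit (fun z s => θ z (-s)) m O b a where
  cont := h.cont.comp (continuous_fst.prodMk continuous_snd.neg)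
  zero z := by simp [h.zero]
  add z s t := by
    simp only [h.add]
    congr 1; ring
  pres s := h.pres (-s)
  isOpen := h.isOpen
  a_nonneg := h.b_nonneg
  b_nonneg := h.a_nonneg
  lt_a z s hs := by simpa using h.lt_b z s hs
  lt_b z s hs := h.lt_a z s hs

lemma a_pos_iff (h : Transit θ m O a b) (z : Z) : 0 < a z ↔ z ∈ O := by
  rw [h.lt_a z 0 le_rfl]
  simp [h.zero]

lemma b_pos_iff (h : Transit θ m O a b) (z : Z) : 0 < b z ↔ z ∈ O := h.reverse.a_pos_iff z

lemma cont_right (h : Transit θ m O a b) (z : Z) : Continuous (θ z) :=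
  h.cont.comp (continuous_const.prodMk continuous_id)

lemma mem_of_lt (h : Transit θ m O a b) {z : Z} {σ : ℝ} (h1 : -a z < σ) (h2 : σ < b z) :
    θ z σ ∈ O := by
  rcases le_total 0 σ with hs | hs
  · exact (h.lt_b z σ hs).1 h2 σ ⟨hs, le_rfl⟩
  · have := (h.lt_a z (-σ) (by linarith)).1 (by linarith) (-σ) ⟨by linarith, le_rfl⟩
    simpa using this

/-- The complement of `O` is closed, so the exit time is attained outside `O`. -/
lemma exit_notMem (h : Transit θ m O a b) {z : Z} (hz : z ∈ O) : θ z (-a z) ∉ O := by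
  intro hmem
  have hc : Continuous (fun r : ℝ => θ z (-r)) := (h.cont_right z).comp continuous_neg
  have hev : ∀ᶠ r in 𝓝 (a z), θ z (-r) ∈ O :=
    hc.continuousAt.eventually (h.isOpen.mem_nhds hmem)
  obtain ⟨ε, hε, hball⟩ := Metric.eventually_nhds_iff.1 hev
  have hp := (h.a_pos_iff z).2 hz
  have : a z + ε / 2 < a z := by
    refine (h.lt_a z _ (by linarith)).2 fun r hr => ?_
    rcases lt_or_ge r (a z) with hra | hra
    · exact h.mem_of_lt (by linarith) (by linarith [(h.b_pos_iff z).2 hz, hr.1])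
    · refine hball ?_
      rw [Real.dist_eq, abs_of_nonneg (by linarith)]
      linarith [hr.2]
  linarith

lemma a_eq (h : Transit θ m O a b) {z : Z} {c : ℝ} (hc : 0 < c)
    (h1 : ∀ r, 0 ≤ r → r < c → θ z (-r) ∈ O) (h2 : θ z (-c) ∉ O) : a z = c := by
  have hz : z ∈ O := by simpa [h.zero] using h1 0 le_rfl hc
  apply le_antisymm
  · by_contra! hlt
    exact h2 ((h.lt_a z c hc.le).1 hlt c ⟨hc.le, le_rfl⟩)
  · by_contra! hlt
    exact h.exit_notMem hz (h1 _ (h.a_nonneg z) hlt)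

lemma a_flow (h : Transit θ m O a b) {z : Z} (hz : z ∈ O) {σ : ℝ} (h1 : -a z < σ)
    (h2 : σ < b z) : a (θ z σ) = a z + σ := by
  refine h.a_eq (by linarith) (fun r hr hr' => ?_) ?_
  · rw [h.add]
    exact h.mem_of_lt (by linarith) (by linarith)
  · rw [h.add]
    have : σ + -(a z + σ) = -a z := by ring
    rw [this]
    exact h.exit_notMem hz

lemma b_flow (h : Transit θ m O a b) {z : Z} (hz : z ∈ O) {σ : ℝ} (h1 : -a z < σ)
    (h2 : σ < b z) : b (θ z σ) = b z - σ := by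
  have := h.reverse.a_flow hz (σ := -σ) (by linarith) (by linarith)
  simpa [sub_eq_add_neg] using this

/-- All points of one trajectory segment inside `O` have the same entrance point. -/
lemma entrance_flow (h : Transit θ m O a b) {z : Z} (hz : z ∈ O) {σ : ℝ} (h1 : -a z < σ)
    (h2 : σ < b z) : θ (θ z σ) (-a (θ z σ)) = θ z (-a z) := by
  rw [h.a_flow hz h1 h2, h.add]
  congr 1; ring

lemma a_of_entrance (h : Transit θ m O a b) {ζ : Z} (hζ : ζ ∉ O) {s : ℝ} (hs : 0 < s)
    (hr : ∀ r ∈ Ioc 0 s, θ ζ r ∈ O) : a (θ ζ s) = s := by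
  refine h.a_eq hs (fun r h0 h1 => ?_) ?_
  · rw [h.add]
    exact hr _ ⟨by linarith, by linarith⟩
  · rw [h.add]
    simpa [h.zero] using hζ

/-- The entrance points of `O` are the points outside `O` whose forward trajectory lies in `O`
for a short time. -/
lemma entrance_eq (h : Transit θ m O a b) :
    {ζ ∈ frontier O | ∃ ξ ∈ O, ζ = θ ξ (-a ξ)} =
      {ζ | ζ ∉ O ∧ ∃ ε > 0, ∀ r ∈ Ioc 0 ε, θ ζ r ∈ O} := by
  ext ζ
  constructor
  · rintro ⟨-, ξ, hξ, rfl⟩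
    have hp := (h.a_pos_iff ξ).2 hξ
    refine ⟨h.exit_notMem hξ, a ξ / 2, by linarith, fun r hr => ?_⟩
    rw [h.add]
    exact h.mem_of_lt (by linarith [hr.1]) (by linarith [hr.2, (h.b_pos_iff ξ).2 hξ])
  · rintro ⟨hζ, ε, hε, hr⟩
    have ha := h.a_of_entrance hζ hε hr
    refine ⟨?_, θ ζ ε, hr ε ⟨hε, le_rfl⟩, ?_⟩
    · rw [h.isOpen.frontier_eq]
      refine ⟨?_, hζ⟩
      have ht : Tendsto (θ ζ) (𝓝[>] 0) (𝓝 ζ) := by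
        have := ((h.cont_right ζ).tendsto 0).mono_left (nhdsWithin_le_nhds (s := Ioi 0))
        rwa [h.zero] at this
      refine mem_closure_of_tendsto ht ?_
      filter_upwards [Ioc_mem_nhdsGT hε] with r hr' using hr r hr'
    · rw [ha, h.add]
      simp [h.zero]

lemma entrance_mem (h : Transit θ m O a b) {z : Z} (hz : z ∈ O) :
    θ z (-a z) ∈ {ζ ∈ frontier O | ∃ ξ ∈ O, ζ = θ ξ (-a ξ)} := by
  rw [h.entrance_eq]
  have hp := (h.a_pos_iff z).2 hz
  refine ⟨h.exit_notMem hz, a z / 2, by linarith, fun r hr => ?_⟩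
  rw [h.add]
  exact h.mem_of_lt (by linarith [hr.1]) (by linarith [hr.2, (h.b_pos_iff z).2 hz])

lemma isOpen_forall (h : Transit θ m O a b) {K : Set ℝ} (hK : IsCompact K) :
    IsOpen {z | ∀ r ∈ K, θ z r ∈ O} := by
  rw [isOpen_iff_eventually]
  intro z hz
  refine hK.eventually_forall_of_forall_eventually fun r hr => ?_
  exact h.cont.continuousAt.eventually (h.isOpen.mem_nhds (hz r hr))

lemma measurable_a [OpensMeasurableSpace Z] (h : Transit θ m O a b) : Measurable a := by
  refine measurable_of_Ioi fun c => ?_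
  rcases lt_or_ge c 0 with hc | hc
  · have : a ⁻¹' Ioi c = univ := by
      ext z; simpa using lt_of_lt_of_le hc (h.a_nonneg z)
    rw [this]; exact MeasurableSet.univ
  · have : a ⁻¹' Ioi c = {z | ∀ r ∈ Icc 0 c, θ z (-r) ∈ O} := by
      ext z; exact h.lt_a z c hc
    rw [this]
    exact (h.reverse.isOpen_forall isCompact_Icc).measurableSet

lemma measurable_b [OpensMeasurableSpace Z] (h : Transit θ m O a b) : Measurable b :=
  h.reverse.measurable_a

lemma measurable_entrance [BorelSpace Z] [SecondCountableTopology Z]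
    (h : Transit θ m O a b) : Measurable (fun z => θ z (-a z)) :=
  h.cont.measurable.comp (measurable_id.prodMk h.measurable_a.neg)

lemma measurableSet_forall [OpensMeasurableSpace Z] (h : Transit θ m O a b) (c : ℝ) :
    MeasurableSet {ζ | ζ ∉ O ∧ ∀ r ∈ Ioc 0 c, θ ζ r ∈ O} := by
  have : {ζ | ζ ∉ O ∧ ∀ r ∈ Ioc 0 c, θ ζ r ∈ O} =
      Oᶜ ∩ ⋂ k : ℕ, {ζ | ∀ r ∈ Icc (1 / ((k : ℝ) + 1)) c, θ ζ r ∈ O} := by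
    ext ζ
    simp only [mem_ofPred_eq, mem_inter_iff, mem_compl_iff, mem_iInter]
    refine and_congr_right fun _ => ⟨fun H k r hr => H r ⟨?_, hr.2⟩, fun H r hr => ?_⟩
    · exact lt_of_lt_of_le (by positivity) hr.1
    · obtain ⟨k, hk⟩ := exists_nat_one_div_lt hr.1
      exact H k r ⟨hk.le, hr.2⟩
  rw [this]
  exact h.isOpen.measurableSet.compl.inter
    (MeasurableSet.iInter fun k => (h.isOpen_forall isCompact_Icc).measurableSet)

/-- The set swept out from `E` during the times `I` consists of the points of `O` which entered
through `E` and whose age `a` lies in `I`. -/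
lemma image_eq (h : Transit θ m O a b) {E : Set Z} {I : Set ℝ}
    (hE : E ⊆ Oᶜ) (hI : I ⊆ Ioi 0) (hEI : ∀ ξ ∈ E, ∀ s ∈ I, ∀ r ∈ Ioc 0 s, θ ξ r ∈ O) :
    (fun q : Z × ℝ => θ q.1 q.2) '' (E ×ˢ I) = {z | z ∈ O ∧ θ z (-a z) ∈ E ∧ a z ∈ I} := by
  ext z
  constructor
  · rintro ⟨⟨ξ, s⟩, ⟨hξ, hs⟩, rfl⟩
    have ha := h.a_of_entrance (hE hξ) (hI hs) (hEI ξ hξ s hs)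
    refine ⟨hEI ξ hξ s hs s ⟨hI hs, le_rfl⟩, ?_, ?_⟩
    · simp only [ha, h.add]
      simpa [h.zero] using hξ
    · simpa only [ha] using hs
  · rintro ⟨-, h1, h2⟩
    refine ⟨(θ z (-a z), a z), ⟨h1, h2⟩, ?_⟩
    simp [h.add, h.zero]

/-- Shifting `z` by `-σ` lands at a point `w` of the swept set with `σ` admissible for the segment
of `w` exactly when `z` lies in `O`, entered through `E`, and has age `a z` with `a z - σ ∈ I`. -/
lemma shift_iff (h : Transit θ m O a b) {E : Set Z} {I : Set ℝ}
    (hI : I ⊆ Ioi 0) (hEI : ∀ ξ ∈ E, ∀ s ∈ I, ∀ r ∈ Ioc 0 s, θ ξ r ∈ O) (z : Z) (σ : ℝ) :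
    ((θ z (-σ) ∈ O ∧ θ (θ z (-σ)) (-a (θ z (-σ))) ∈ E ∧ a (θ z (-σ)) ∈ I) ∧
      -a (θ z (-σ)) < σ ∧ σ < b (θ z (-σ))) ↔
    ((z ∈ O ∧ θ z (-a z) ∈ E) ∧ a z - σ ∈ I) := by
  constructor
  · rintro ⟨⟨h1, h2, h3⟩, h4, h5⟩
    have hz : θ (θ z (-σ)) σ = z := by rw [h.add]; simp [h.zero]
    have e1 := h.mem_of_lt h4 h5
    have e2 := h.a_flow h1 h4 h5
    have e3 := h.entrance_flow h1 h4 h5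
    rw [hz] at e1 e2 e3
    refine ⟨⟨e1, e3 ▸ h2⟩, ?_⟩
    rw [e2]; simpa using h3
  · rintro ⟨⟨h1, h2⟩, h3⟩
    have hs : 0 < a z - σ := hI h3
    have hap := (h.a_pos_iff z).2 h1
    have hbp := (h.b_pos_iff z).2 h1
    have hbz : -σ < b z := by
      -- for `σ < 0` the forward segment from `z` up to time `-σ` lies in `O` by `hEI`
      by_contra! hlt
      have := hEI _ h2 _ h3 (a z + b z) ⟨by linarith, by linarith⟩
      rw [h.add] at this
      have h4 := h.reverse.exit_notMem h1
      simp only [neg_neg] at h4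
      apply h4
      convert this using 2
      ring
    have h4 : -a z < -σ := by linarith
    have e2 := h.a_flow h1 h4 hbz
    have e4 := h.b_flow h1 h4 hbz
    refine ⟨⟨h.mem_of_lt h4 hbz, ?_, ?_⟩, ?_, ?_⟩
    · rw [h.entrance_flow h1 h4 hbz]; exact h2
    · rw [e2]; simpa [sub_eq_add_neg] using h3
    · rw [e2]; linarith
    · rw [e4]; linarith

/-- The boundary measure: the image under the entrance map of the invariant measure on `O`,
weighted by the inverse of the length `a + b` of the trajectory segment inside `O`. -/
def bdry (θ : Z → ℝ → Z) (m : Measure Z) (O : Set Z) (a b : Z → ℝ) : Measure Z :=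
  ((m.restrict O).withDensity (fun z => (ENNReal.ofReal (a z + b z))⁻¹)).map
    (fun z => θ z (-a z))

variable [BorelSpace Z] [SecondCountableTopology Z]

lemma bdry_apply (h : Transit θ m O a b) {E : Set Z} (hE : MeasurableSet E) :
    bdry θ m O a b E = ∫⁻ z, {z | z ∈ O ∧ θ z (-a z) ∈ E}.indicator
      (fun z => (ENNReal.ofReal (a z + b z))⁻¹) z ∂m := by
  have hm := h.measurable_entrance hE
  rw [bdry, Measure.map_apply h.measurable_entrance hE, withDensity_apply _ hm,
    Measure.restrict_restrict hm, lintegral_indicator, inter_comm]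
  · rfl
  · exact h.isOpen.measurableSet.inter hm

lemma bdry_compl (h : Transit θ m O a b) :
    bdry θ m O a b {ζ ∈ frontier O | ∃ ξ ∈ O, ζ = θ ξ (-a ξ)}ᶜ = 0 := by
  have hS : MeasurableSet {ζ ∈ frontier O | ∃ ξ ∈ O, ζ = θ ξ (-a ξ)} := by
    have : {ζ ∈ frontier O | ∃ ξ ∈ O, ζ = θ ξ (-a ξ)} =
        ⋃ n : ℕ, {ζ | ζ ∉ O ∧ ∀ r ∈ Ioc 0 (1 / ((n : ℝ) + 1)), θ ζ r ∈ O} := by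
      rw [h.entrance_eq]
      ext ζ
      simp only [mem_ofPred_eq, mem_iUnion]
      constructor
      · rintro ⟨h1, ε, hε, h2⟩
        obtain ⟨n, hn⟩ := exists_nat_one_div_lt hε
        exact ⟨n, h1, fun r hr => h2 r ⟨hr.1, hr.2.trans hn.le⟩⟩
      · rintro ⟨n, h1, h2⟩
        exact ⟨h1, _, by positivity, h2⟩
    rw [this]
    exact MeasurableSet.iUnion fun n => h.measurableSet_forall _
  rw [h.bdry_apply hS.compl]
  have : {z | z ∈ O ∧ θ z (-a z) ∈ {ζ ∈ frontier O | ∃ ξ ∈ O, ζ = θ ξ (-a ξ)}ᶜ} = ∅ := by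
    refine eq_empty_of_forall_notMem ?_
    rintro z ⟨hz, hz'⟩
    exact hz' (h.entrance_mem hz)
  rw [this]
  simp

/-- Averaging over the trajectory segment through each point and using invariance of `m`
turns the measure of a swept set into a product. -/
lemma swept_measure [SFinite m] (h : Transit θ m O a b) {E : Set Z} {I : Set ℝ}
    (mE : MeasurableSet E) (mI : MeasurableSet I) (hE : E ⊆ Oᶜ) (hI : I ⊆ Ioi 0)
    (hEI : ∀ ξ ∈ E, ∀ s ∈ I, ∀ r ∈ Ioc 0 s, θ ξ r ∈ O) :
    m.restrict O ((fun q : Z × ℝ => θ q.1 q.2) '' (E ×ˢ I)) = bdry θ m O a b E * volume I := by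
  have ma := h.measurable_a
  have mb := h.measurable_b
  have me := h.measurable_entrance
  have mO := h.isOpen.measurableSet
  set L : Z → ℝ≥0∞ := fun z => (ENNReal.ofReal (a z + b z))⁻¹ with hL
  have mL : Measurable L := (ma.add mb).ennreal_ofReal.inv
  set A : Set Z := {z | z ∈ O ∧ θ z (-a z) ∈ E ∧ a z ∈ I} with hA
  have mA : MeasurableSet A := mO.inter ((me mE).inter (ma mI))
  set C : Set Z := {z | z ∈ O ∧ θ z (-a z) ∈ E} with hC
  have mC : MeasurableSet C := mO.inter (me mE)
  -- `B` pairs a point of the swept set with the shifts that keep it on its segment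
  set B : Set (Z × ℝ) := {p | p.1 ∈ A ∧ -a p.1 < p.2 ∧ p.2 < b p.1} with hB
  have mB : MeasurableSet B :=
    (measurable_fst mA).inter
      ((measurableSet_lt (ma.comp measurable_fst).neg measurable_snd).inter
        (measurableSet_lt measurable_snd (mb.comp measurable_fst)))
  set D : Set (Z × ℝ) := {p | p.1 ∈ C ∧ a p.1 - p.2 ∈ I} with hD
  have mD : MeasurableSet D :=
    (measurable_fst mC).inter (((ma.comp measurable_fst).sub measurable_snd) mI)
  set g : Z × ℝ → ℝ≥0∞ := B.indicator (fun p => L p.1) with hg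
  have mg : Measurable g := (mL.comp measurable_fst).indicator mB
  set k : Z × ℝ → ℝ≥0∞ := D.indicator (fun p => L p.1) with hk
  have mk : Measurable k := (mL.comp measurable_fst).indicator mD
  rw [h.image_eq hE hI hEI, Measure.restrict_eq_self _ (fun z hz => hz.1)]
  have step1 : ∀ z, ∫⁻ σ, g (z, σ) = A.indicator 1 z := by
    intro z
    by_cases hz : z ∈ A
    · have hp : 0 < a z + b z := add_pos ((h.a_pos_iff z).2 hz.1) ((h.b_pos_iff z).2 hz.1)
      have : (fun σ => g (z, σ)) = (Ioo (-a z) (b z)).indicator (fun _ => L z) := by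
        ext σ
        by_cases hσ : σ ∈ Ioo (-a z) (b z)
        · rw [indicator_of_mem hσ, hg, indicator_of_mem (show (z, σ) ∈ B from ⟨hz, hσ⟩)]
        · rw [indicator_of_notMem hσ, hg,
            indicator_of_notMem (fun hh : (z, σ) ∈ B => hσ hh.2)]
      rw [this, lintegral_indicator_const measurableSet_Ioo, Real.volume_Ioo,
        indicator_of_mem hz, sub_neg_eq_add, add_comm (b z)]
      exact ENNReal.inv_mul_cancel (by simpa using hp) ENNReal.ofReal_ne_top
    · have : (fun σ => g (z, σ)) = fun _ => 0 := by
        ext σ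
        rw [hg, indicator_of_notMem (fun hh : (z, σ) ∈ B => hz hh.1)]
      rw [this, indicator_of_notMem hz]; simp
  have step2 : ∀ z σ, g (θ z (-σ), σ) = k (z, σ) := by
    intro z σ
    have hiff : (θ z (-σ), σ) ∈ B ↔ (z, σ) ∈ D := h.shift_iff hI hEI z σ
    by_cases hz : (z, σ) ∈ D
    · have hz' := hiff.2 hz
      rw [hg, hk, indicator_of_mem hz, indicator_of_mem hz']
      have hz2 : θ (θ z (-σ)) σ = z := by rw [h.add]; simp [h.zero]
      have e1 := h.a_flow hz'.1.1 hz'.2.1 hz'.2.2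
      have e2 := h.b_flow hz'.1.1 hz'.2.1 hz'.2.2
      simp only [hz2] at e1 e2
      simp only [hL, e1, e2]
      congr 2; ring
    · rw [hg, hk, indicator_of_notMem hz, indicator_of_notMem (fun hh => hz (hiff.1 hh))]
  have step3 : ∀ z, ∫⁻ σ, k (z, σ) = C.indicator L z * volume I := by
    intro z
    have : (fun σ => k (z, σ)) =
        fun σ => ((fun s => C.indicator L z * I.indicator 1 s) (a z - σ)) := by
      ext σ
      by_cases hz : z ∈ C <;> by_cases hs : a z - σ ∈ I
      · simp only [hk, indicator_of_mem hz, indicator_of_mem hs,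
          indicator_of_mem (show (z, σ) ∈ D from ⟨hz, hs⟩), Pi.one_apply, mul_one]
      · simp only [hk, indicator_of_notMem hs,
          indicator_of_notMem (fun hh : (z, σ) ∈ D => hs hh.2), mul_zero]
      · simp only [hk, indicator_of_notMem hz,
          indicator_of_notMem (fun hh : (z, σ) ∈ D => hz hh.1), zero_mul]
      · simp only [hk, indicator_of_notMem hz,
          indicator_of_notMem (fun hh : (z, σ) ∈ D => hz hh.1), zero_mul]
    rw [this, lintegral_sub_left_eq_self (fun s => C.indicator L z * I.indicator 1 s) (a z),
      lintegral_const_mul _ (measurable_one.indicator mI), lintegral_indicator_one mI]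
  calc m A = ∫⁻ z, A.indicator 1 z ∂m := (lintegral_indicator_one mA).symm
    _ = ∫⁻ z, (∫⁻ σ, g (z, σ)) ∂m := by simp_rw [step1]
    _ = ∫⁻ (σ : ℝ), ∫⁻ z, g (z, σ) ∂m := lintegral_lintegral_swap mg.aemeasurable
    _ = ∫⁻ (σ : ℝ), ∫⁻ z, g (θ z (-σ), σ) ∂m := by
        refine lintegral_congr fun σ => ?_
        exact ((h.pres (-σ)).lintegral_comp (mg.comp (measurable_id.prodMk measurable_const))).symm
    _ = ∫⁻ (σ : ℝ), ∫⁻ z, k (z, σ) ∂m := by simp_rw [step2]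
    _ = ∫⁻ z, (∫⁻ σ, k (z, σ)) ∂m := (lintegral_lintegral_swap
        (f := fun z σ => k (z, σ)) mk.aemeasurable).symm
    _ = ∫⁻ z, C.indicator L z * volume I ∂m := by simp_rw [step3]
    _ = bdry θ m O a b E * volume I := by
        rw [lintegral_mul_const _ (mL.indicator mC), h.bdry_apply mE]

/-- Existence and uniqueness of the boundary measure on the entrance boundary of `O`. -/
theorem existsUnique [SFinite m] (h : Transit θ m O a b) :
    ∃! ν : Measure Z, ν {ζ ∈ frontier O | ∃ ξ ∈ O, ζ = θ ξ (-a ξ)}ᶜ = 0 ∧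
      ∀ (E : Set Z) (I : Set ℝ), MeasurableSet E → MeasurableSet I →
        E ⊆ {ζ ∈ frontier O | ∃ ξ ∈ O, ζ = θ ξ (-a ξ)} → I ⊆ Ioi (0 : ℝ) →
        (∀ ξ ∈ E, ∀ s ∈ I, ∀ r ∈ Ioc 0 s, θ ξ r ∈ O) →
        m.restrict O ((fun q : Z × ℝ => θ q.1 q.2) '' (E ×ˢ I)) = ν E * volume I := by
  have hprop : ∀ (E : Set Z) (I : Set ℝ), MeasurableSet E → MeasurableSet I →
        E ⊆ {ζ ∈ frontier O | ∃ ξ ∈ O, ζ = θ ξ (-a ξ)} → I ⊆ Ioi (0 : ℝ) →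
        (∀ ξ ∈ E, ∀ s ∈ I, ∀ r ∈ Ioc 0 s, θ ξ r ∈ O) →
        m.restrict O ((fun q : Z × ℝ => θ q.1 q.2) '' (E ×ˢ I))
          = bdry θ m O a b E * volume I := by
    intro E I mE mI hE hI hEI
    rw [h.entrance_eq] at hE
    exact h.swept_measure mE mI (fun z hz => (hE hz).1) hI hEI
  refine ⟨bdry θ m O a b, ⟨h.bdry_compl, hprop⟩, ?_⟩
  rintro ν ⟨hν0, hν⟩
  set S := {ζ ∈ frontier O | ∃ ξ ∈ O, ζ = θ ξ (-a ξ)} with hS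
  set Sn : ℕ → Set Z := fun n => {ζ | ζ ∉ O ∧ ∀ r ∈ Ioc 0 (1 / ((n : ℝ) + 1)), θ ζ r ∈ O}
    with hSn
  have mSn : ∀ n, MeasurableSet (Sn n) := fun n => h.measurableSet_forall _
  have hsub : ∀ n, Sn n ⊆ S := by
    intro n ζ hζ
    rw [hS, h.entrance_eq]
    exact ⟨hζ.1, _, by positivity, hζ.2⟩
  have hmono : Monotone Sn := by
    intro i j hij ζ hζ
    exact ⟨hζ.1, fun r hr => hζ.2 r ⟨hr.1, hr.2.trans (Nat.one_div_le_one_div hij)⟩⟩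
  have hcov : S ⊆ ⋃ n, Sn n := by
    intro ζ hζ
    rw [hS, h.entrance_eq] at hζ
    obtain ⟨h1, ε, hε, h2⟩ := hζ
    obtain ⟨n, hn⟩ := exists_nat_one_div_lt hε
    exact mem_iUnion.2 ⟨n, h1, fun r hr => h2 r ⟨hr.1, hr.2.trans hn.le⟩⟩
  have key : ∀ ρ : Measure Z, ρ Sᶜ = 0 → ∀ E, ρ E = ⨆ n, ρ (E ∩ Sn n) := by
    intro ρ hρ E
    have hm : Monotone fun n => E ∩ Sn n :=
      fun i j hij => inter_subset_inter_right _ (hmono hij)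
    rw [← hm.measure_iUnion, ← inter_iUnion]
    refine le_antisymm ?_ (measure_mono inter_subset_left)
    refine (measure_mono (t := (E ∩ ⋃ n, Sn n) ∪ Sᶜ) fun z hz => ?_).trans
      ((measure_union_le _ _).trans (by rw [hρ, add_zero]))
    by_cases hzS : z ∈ S
    · exact Or.inl ⟨hz, hcov hzS⟩
    · exact Or.inr hzS
  ext E mE
  rw [key ν hν0, key _ h.bdry_compl]
  congr 1
  ext n
  have hpos : (0 : ℝ) < 1 / ((n : ℝ) + 1) := by positivity
  have hEI : ∀ ξ ∈ E ∩ Sn n, ∀ s ∈ Ioc (0 : ℝ) (1 / ((n : ℝ) + 1)),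
      ∀ r ∈ Ioc 0 s, θ ξ r ∈ O :=
    fun ξ hξ s hs r hr => hξ.2.2 r ⟨hr.1, hr.2.trans hs.2⟩
  have hE : E ∩ Sn n ⊆ S := inter_subset_right.trans (hsub n)
  have e := (hν _ _ (mE.inter (mSn n)) measurableSet_Ioc hE (fun s hs => hs.1) hEI).symm.trans
    (hprop _ _ (mE.inter (mSn n)) measurableSet_Ioc hE (fun s hs => hs.1) hEI)
  refine (ENNReal.mul_left_inj ?_ ?_).1 e
  · simpa [Real.volume_Ioc] using by positivity
  · simp [Real.volume_Ioc]

end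

end Transit

/-! ### The lifted flow and its exit times -/

section

variable {N : ℕ} {κ : ℝ≥0} {F : (Fin N → ℝ) → (Fin N → ℝ)} {Φ : (Fin N → ℝ) → ℝ → (Fin N → ℝ)}

lemma flow_add (hF : LipschitzWith κ F) (hΦ0 : ∀ x, Φ x 0 = x)
    (hΦ' : ∀ x s, HasDerivAt (Φ x) (F (Φ x s)) s) (x : Fin N → ℝ) (s t : ℝ) :
    Φ (Φ x s) t = Φ x (s + t) := by
  have : Φ (Φ x s) = fun t => Φ x (s + t) := by
    refine ODE_solution_unique_univ (v := fun _ => F) (s := fun _ => univ) (K := κ) (t₀ := 0)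
      (fun _ => hF.lipschitzOnWith) (fun t => ⟨hΦ' _ t, mem_univ _⟩)
      (fun t => ⟨?_, mem_univ _⟩) ?_
    · exact (hΦ' x (s + t)).comp_const_add s t
    · simp [hΦ0]
  exact congrFun this t

lemma flow_dist_nonneg (hF : LipschitzWith κ F) (hΦ0 : ∀ x, Φ x 0 = x)
    (hΦ' : ∀ x s, HasDerivAt (Φ x) (F (Φ x s)) s) (x y : Fin N → ℝ) {t : ℝ} (ht : 0 ≤ t) :
    dist (Φ x t) (Φ y t) ≤ dist x y * Real.exp (κ * t) := by
  have := dist_le_of_trajectories_ODE (v := fun _ => F) (K := κ) (f := Φ x) (g := Φ y)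
    (a := 0) (b := t) (δ := dist x y) (fun _ => hF)
    (fun s _ => (hΦ' x s).continuousAt.continuousWithinAt)
    (fun s _ => (hΦ' x s).hasDerivWithinAt)
    (fun s _ => (hΦ' y s).continuousAt.continuousWithinAt)
    (fun s _ => (hΦ' y s).hasDerivWithinAt) (by simp [hΦ0]) t ⟨ht, le_rfl⟩
  simpa using this

lemma flow_dist (hF : LipschitzWith κ F) (hΦ0 : ∀ x, Φ x 0 = x)
    (hΦ' : ∀ x s, HasDerivAt (Φ x) (F (Φ x s)) s) (x y : Fin N → ℝ) (t : ℝ) :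
    dist (Φ x t) (Φ y t) ≤ dist x y * Real.exp (κ * |t|) := by
  rcases le_total 0 t with ht | ht
  · rw [abs_of_nonneg ht]
    exact flow_dist_nonneg hF hΦ0 hΦ' x y ht
  · rw [abs_of_nonpos ht]
    have := flow_dist_nonneg (F := fun x => -F x) (Φ := fun x s => Φ x (-s)) hF.neg
      (by simpa using hΦ0) (fun x s => by
        have := (hΦ' x (-s)).scomp s (hasDerivAt_neg s)
        rw [neg_one_smul] at this
        exact this)
      x y (t := -t) (by linarith)
    simpa using this

lemma flow_cont (hF : LipschitzWith κ F) (hΦ0 : ∀ x, Φ x 0 = x)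
    (hΦ' : ∀ x s, HasDerivAt (Φ x) (F (Φ x s)) s) :
    Continuous (fun p : (Fin N → ℝ) × ℝ => Φ p.1 p.2) := by
  rw [continuous_iff_continuousAt]
  rintro ⟨x, t⟩
  rw [ContinuousAt, tendsto_iff_dist_tendsto_zero]
  refine squeeze_zero (fun _ => dist_nonneg)
    (g := fun p => dist p.1 x * Real.exp (κ * |p.2|) + dist (Φ x p.2) (Φ x t))
    (fun p => (dist_triangle _ (Φ x p.2) _).trans
      (add_le_add_left (flow_dist hF hΦ0 hΦ' p.1 x p.2) _)) ?_
  have hc : Continuous (Φ x) :=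
    continuous_iff_continuousAt.2 fun s => (hΦ' x s).continuousAt
  have : Continuous fun p : (Fin N → ℝ) × ℝ =>
      dist p.1 x * Real.exp (κ * |p.2|) + dist (Φ x p.2) (Φ x t) := by fun_prop
  simpa using this.tendsto (x, t)

lemma flow_pres (hF : LipschitzWith κ F) (hΦ0 : ∀ x, Φ x 0 = x)
    (hΦ' : ∀ x s, HasDerivAt (Φ x) (F (Φ x s)) s) {μ : Measure (Fin N → ℝ)}
    (hinv : ∀ (A : Set (Fin N → ℝ)) (t : ℝ), MeasurableSet A →
      μ ((fun x => Φ x t) '' A) = μ A) (s : ℝ) :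
    MeasurePreserving (fun x => Φ x s) μ μ := by
  have hm : Measurable (fun x => Φ x s) :=
    ((flow_cont hF hΦ0 hΦ').comp (continuous_id.prodMk continuous_const)).measurable
  refine ⟨hm, ?_⟩
  ext A hA
  rw [Measure.map_apply hm hA, ← hinv A (-s) hA]
  congr 1
  refine (congrFun (image_eq_preimage_of_inverse (f := fun x => Φ x (-s))
    (g := fun x => Φ x s) (fun x => ?_) (fun x => ?_)) A).symm
  · simp [flow_add hF hΦ0 hΦ', hΦ0]
  · simp [flow_add hF hΦ0 hΦ', hΦ0]

lemma mem_of_lt_tauP {Ω : Set (Fin N → ℝ)} {x : Fin N → ℝ} {s r : ℝ}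
    (h : ENNReal.ofReal s < tauP Ω Φ x) (hr : r ∈ Ioc 0 s) : Φ x r ∈ Ω := by
  by_contra hn
  have : tauP Ω Φ x ≤ ENNReal.ofReal r := sInf_le ⟨r, hr.1, rfl, hn⟩
  exact absurd (h.trans_le this) (not_lt.2 (ENNReal.ofReal_le_ofReal hr.2))

lemma lt_tauP {Ω : Set (Fin N → ℝ)} (hΩ : IsOpen Ω) {x : Fin N → ℝ} (hc : Continuous (Φ x))
    {s : ℝ} (hs : 0 ≤ s) (hmem : Φ x s ∈ Ω) (h : ∀ r ∈ Ioc 0 s, Φ x r ∈ Ω) :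
    ENNReal.ofReal s < tauP Ω Φ x := by
  obtain ⟨ε, hε, hball⟩ := Metric.eventually_nhds_iff.1
    (hc.continuousAt.eventually (hΩ.mem_nhds hmem))
  refine ((ENNReal.ofReal_lt_ofReal_iff (q := s + ε / 2) (by linarith)).2
    (by linarith)).trans_le (le_sInf ?_)
  rintro _ ⟨r, hr0, rfl, hr⟩
  refine ENNReal.ofReal_le_ofReal ?_
  by_contra! hlt
  rcases le_or_gt r s with hrs | hrs
  · exact hr (h r ⟨hr0, hrs⟩)
  · refine hr (hball ?_)
    rw [Real.dist_eq, abs_of_pos (by linarith)]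
    linarith

lemma mem_of_lt_tauM {Ω : Set (Fin N → ℝ)} {x : Fin N → ℝ} {s r : ℝ}
    (h : ENNReal.ofReal s < tauM Ω Φ x) (hr : r ∈ Ioc 0 s) : Φ x (-r) ∈ Ω :=
  mem_of_lt_tauP (Φ := fun x s => Φ x (-s)) h hr

lemma lt_tauM {Ω : Set (Fin N → ℝ)} (hΩ : IsOpen Ω) {x : Fin N → ℝ} (hc : Continuous (Φ x))
    {s : ℝ} (hs : 0 ≤ s) (hmem : Φ x (-s) ∈ Ω) (h : ∀ r ∈ Ioc 0 s, Φ x (-r) ∈ Ω) :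
    ENNReal.ofReal s < tauM Ω Φ x :=
  lt_tauP (Φ := fun x s => Φ x (-s)) hΩ (hc.comp continuous_neg) hs hmem h

variable {Ω : Set (Fin N → ℝ)} {T : ℝ} {ξ : (Fin N → ℝ) × ℝ}

lemma mem_of_lt_ellP (hξ : 0 ≤ ξ.2) {s r : ℝ} (h : ENNReal.ofReal s < ellP Ω Φ T ξ)
    (hr : r ∈ Ioc 0 s) : lflow Φ ξ r ∈ Ω ×ˢ Ioo (0 : ℝ) T := by
  rw [ellP, lt_inf_iff, ENNReal.ofReal_lt_ofReal_iff'] at h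
  refine ⟨mem_of_lt_tauP h.1 hr, ?_, ?_⟩ <;> simp only [lflow] <;>
    linarith [hr.1, hr.2, h.2.1]

lemma lt_ellP (hΩ : IsOpen Ω) (hc : ∀ x, Continuous (Φ x)) {s : ℝ} (hs : 0 ≤ s)
    (hmem : lflow Φ ξ s ∈ Ω ×ˢ Ioo (0 : ℝ) T)
    (h : ∀ r ∈ Ioc 0 s, lflow Φ ξ r ∈ Ω ×ˢ Ioo (0 : ℝ) T) :
    ENNReal.ofReal s < ellP Ω Φ T ξ := by
  have h2 : ξ.2 + s < T := hmem.2.2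
  rw [ellP, lt_inf_iff, ENNReal.ofReal_lt_ofReal_iff']
  exact ⟨lt_tauP hΩ (hc _) hs hmem.1 fun r hr => (h r hr).1, by linarith, by linarith⟩

lemma mem_of_lt_ellM (hξ : ξ.2 ≤ T) {s r : ℝ} (h : ENNReal.ofReal s < ellM Ω Φ ξ)
    (hr : r ∈ Ioc 0 s) : lflow Φ ξ (-r) ∈ Ω ×ˢ Ioo (0 : ℝ) T := by
  rw [ellM, lt_inf_iff, ENNReal.ofReal_lt_ofReal_iff'] at h
  refine ⟨mem_of_lt_tauM h.1 hr, ?_, ?_⟩ <;> simp only [lflow] <;>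
    linarith [hr.1, hr.2, h.2.1]

lemma lt_ellM (hΩ : IsOpen Ω) (hc : ∀ x, Continuous (Φ x)) {s : ℝ} (hs : 0 ≤ s)
    (hmem : lflow Φ ξ (-s) ∈ Ω ×ˢ Ioo (0 : ℝ) T)
    (h : ∀ r ∈ Ioc 0 s, lflow Φ ξ (-r) ∈ Ω ×ˢ Ioo (0 : ℝ) T) :
    ENNReal.ofReal s < ellM Ω Φ ξ := by
  have h2 : 0 < ξ.2 + -s := hmem.2.1
  rw [ellM, lt_inf_iff, ENNReal.ofReal_lt_ofReal_iff']
  exact ⟨lt_tauM hΩ (hc _) hs hmem.1 fun r hr => (h r hr).1, by linarith, by linarith⟩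

lemma ellP_ne_top : ellP Ω Φ T ξ ≠ ⊤ := (inf_le_right.trans_lt ENNReal.ofReal_lt_top).ne

lemma ellM_ne_top : ellM Ω Φ ξ ≠ ⊤ := (inf_le_right.trans_lt ENNReal.ofReal_lt_top).ne

/-- Passage from an extended exit time `e`, known on `O` and possibly nonzero elsewhere, to the
real exit time vanishing off `O` that `Transit` requires. -/
lemma lt_indicator_toReal {Z : Type*} {θ : Z → ℝ → Z} {O : Set Z} {e : Z → ℝ≥0∞} {z : Z}
    (h0 : θ z 0 = z) (htop : e z ≠ ⊤)
    (k1 : z ∈ O → ∀ s r, ENNReal.ofReal s < e z → r ∈ Ioc 0 s → θ z r ∈ O)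
    (k2 : ∀ s, 0 ≤ s → θ z s ∈ O → (∀ r ∈ Ioc 0 s, θ z r ∈ O) → ENNReal.ofReal s < e z)
    {s : ℝ} (hs : 0 ≤ s) :
    s < O.indicator (fun z => (e z).toReal) z ↔ ∀ r ∈ Icc 0 s, θ z r ∈ O := by
  by_cases hz : z ∈ O
  · rw [indicator_of_mem hz, ← ENNReal.ofReal_lt_iff_lt_toReal hs htop]
    constructor
    · intro h r hr
      rcases hr.1.eq_or_lt with h' | h'
      · rwa [← h', h0]
      · exact k1 hz s r h ⟨h', hr.2⟩
    · exact fun h => k2 s hs (h s ⟨hs, le_rfl⟩) fun r hr => h r ⟨hr.1.le, hr.2⟩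
  · rw [indicator_of_notMem hz]
    refine iff_of_false hs.not_gt fun h => hz ?_
    simpa [h0] using h 0 ⟨le_rfl, hs⟩

lemma lflow_transit (hF : LipschitzWith κ F) (hΦ0 : ∀ x, Φ x 0 = x)
    (hΦ' : ∀ x s, HasDerivAt (Φ x) (F (Φ x s)) s) (hΩ : IsOpen Ω)
    {μ : Measure (Fin N → ℝ)} [SFinite μ]
    (hinv : ∀ (A : Set (Fin N → ℝ)) (t : ℝ), MeasurableSet A →
      μ ((fun x => Φ x t) '' A) = μ A) :
    Transit (lflow Φ) (μ.prod volume) (Ω ×ˢ Ioo (0 : ℝ) T)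
      ((Ω ×ˢ Ioo (0 : ℝ) T).indicator fun ξ => (ellM Ω Φ ξ).toReal)
      ((Ω ×ˢ Ioo (0 : ℝ) T).indicator fun ξ => (ellP Ω Φ T ξ).toReal) := by
  have hc : ∀ x, Continuous (Φ x) := fun x =>
    continuous_iff_continuousAt.2 fun s => (hΦ' x s).continuousAt
  refine ⟨?_, fun z => ?_, fun z s t => ?_, fun s => ?_, hΩ.prod isOpen_Ioo, fun z => ?_,
    fun z => ?_, fun z s hs => ?_, fun z s hs => ?_⟩
  · exact ((flow_cont hF hΦ0 hΦ').comp
      ((continuous_fst.comp continuous_fst).prodMk continuous_snd)).prodMk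
      ((continuous_snd.comp continuous_fst).add continuous_snd)
  · simp [lflow, hΦ0]
  · simp [lflow, flow_add hF hΦ0 hΦ', add_assoc]
  · exact (flow_pres hF hΦ0 hΦ' hinv s).prod (measurePreserving_add_right volume s)
  · exact indicator_nonneg (fun _ _ => ENNReal.toReal_nonneg) z
  · exact indicator_nonneg (fun _ _ => ENNReal.toReal_nonneg) z
  · exact lt_indicator_toReal (θ := fun z s => lflow Φ z (-s)) (by simp [lflow, hΦ0])
      ellM_ne_top (fun hz s r h hr => mem_of_lt_ellM hz.2.2.le h hr)
      (fun s hs hm h => lt_ellM hΩ hc hs hm h) hs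
  · exact lt_indicator_toReal (θ := lflow Φ) (by simp [lflow, hΦ0])
      ellP_ne_top (fun hz s r h hr => mem_of_lt_ellP hz.2.1.le h hr)
      (fun s hs hm h => lt_ellP hΩ hc hs hm h) hs

lemma SigmaM_eq : SigmaM Ω Φ T = {ζ ∈ frontier (Ω ×ˢ Ioo (0 : ℝ) T) |
    ∃ ξ ∈ Ω ×ˢ Ioo (0 : ℝ) T, ζ = lflow Φ ξ
      (-(Ω ×ˢ Ioo (0 : ℝ) T).indicator (fun ξ => (ellM Ω Φ ξ).toReal) ξ)} := by
  ext ζ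
  refine and_congr_right fun _ => exists_congr fun ξ => and_congr_right fun hξ => ?_
  rw [indicator_of_mem hξ]

lemma SigmaP_eq : SigmaP Ω Φ T = {ζ ∈ frontier (Ω ×ˢ Ioo (0 : ℝ) T) |
    ∃ ξ ∈ Ω ×ˢ Ioo (0 : ℝ) T, ζ = lflow Φ ξ
      (- -(Ω ×ˢ Ioo (0 : ℝ) T).indicator (fun ξ => (ellP Ω Φ T ξ).toReal) ξ)} := by
  ext ζ
  refine and_congr_right fun _ => exists_congr fun ξ => and_congr_right fun hξ => ?_
  rw [indicator_of_mem hξ, neg_neg]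

lemma snd_nonneg_of_mem_SigmaM (h : ξ ∈ SigmaM Ω Φ T) : 0 ≤ ξ.2 := by
  obtain ⟨-, η, hη, rfl⟩ := h
  have : (ellM Ω Φ η).toReal ≤ η.2 :=
    ENNReal.toReal_le_of_le_ofReal hη.2.1.le inf_le_right
  simp only [lflow]; linarith

lemma snd_le_of_mem_SigmaP (h : ξ ∈ SigmaP Ω Φ T) : ξ.2 ≤ T := by
  obtain ⟨-, η, hη, rfl⟩ := h
  have : (ellP Ω Φ T η).toReal ≤ T - η.2 :=
    ENNReal.toReal_le_of_le_ofReal (by linarith [hη.2.2]) inf_le_right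
  simp only [lflow]; linarith

end

/-! ### The boundary measures -/

theorem stmt_0
    {N : ℕ} (hN : 1 ≤ N) (κ : ℝ≥0) (hκ : 0 < κ)
    (F : (Fin N → ℝ) → (Fin N → ℝ)) (hF : LipschitzWith κ F)
    (Φ : (Fin N → ℝ) → ℝ → (Fin N → ℝ))
    (hΦ0 : ∀ x, Φ x 0 = x)
    (hΦ' : ∀ x s, HasDerivAt (Φ x) (F (Φ x s)) s)
    (Ω : Set (Fin N → ℝ)) (hΩ : IsOpen Ω)
    (μ : Measure (Fin N → ℝ)) [IsFiniteMeasureOnCompacts μ]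
    (hinv : ∀ (A : Set (Fin N → ℝ)) (t : ℝ), MeasurableSet A →
      μ ((fun x => Φ x t) '' A) = μ A)
    (T : ℝ) (hT : 0 < T) :
    (∃! νm : Measure ((Fin N → ℝ) × ℝ),
      νm (SigmaM Ω Φ T)ᶜ = 0 ∧
      ∀ (E : Set ((Fin N → ℝ) × ℝ)) (I : Set ℝ), MeasurableSet E → MeasurableSet I →
        E ⊆ SigmaM Ω Φ T → I ⊆ Ioi (0 : ℝ) →
        (∀ ξ ∈ E, ∀ s ∈ I, ENNReal.ofReal s < ellP Ω Φ T ξ) →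
        ((μ.restrict Ω).prod (volume.restrict (Ioo (0 : ℝ) T)))
            ((fun q : ((Fin N → ℝ) × ℝ) × ℝ => lflow Φ q.1 q.2) '' (E ×ˢ I))
          = νm E * volume I) ∧
    (∃! νp : Measure ((Fin N → ℝ) × ℝ),
      νp (SigmaP Ω Φ T)ᶜ = 0 ∧
      ∀ (E : Set ((Fin N → ℝ) × ℝ)) (I : Set ℝ), MeasurableSet E → MeasurableSet I →
        E ⊆ SigmaP Ω Φ T → I ⊆ Ioi (0 : ℝ) →
        (∀ ξ ∈ E, ∀ s ∈ I, ENNReal.ofReal s < ellM Ω Φ ξ) →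
        ((μ.restrict Ω).prod (volume.restrict (Ioo (0 : ℝ) T)))
            ((fun q : ((Fin N → ℝ) × ℝ) × ℝ => lflow Φ q.1 (-q.2)) '' (E ×ˢ I))
          = νp E * volume I) := by
  have hc : ∀ x, Continuous (Φ x) := fun x =>
    continuous_iff_continuousAt.2 fun s => (hΦ' x s).continuousAt
  have H := lflow_transit (T := T) hF hΦ0 hΦ' hΩ hinv
  rw [Measure.prod_restrict]
  constructor
  · refine (existsUnique_congr fun ν => ?_).1 H.existsUnique
    rw [← SigmaM_eq]
    refine and_congr_right fun _ => forall₂_congr fun E I => forall₄_congr fun _ _ hE hI =>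
      imp_congr_left (forall₄_congr fun ξ hξ s hs => ⟨fun h => ?_, fun h r hr => ?_⟩)
    · exact lt_ellP hΩ hc (le_of_lt (hI hs)) (h s ⟨hI hs, le_rfl⟩) h
    · exact mem_of_lt_ellP (snd_nonneg_of_mem_SigmaM (hE hξ)) h hr
  · refine (existsUnique_congr fun ν => ?_).1 H.reverse.existsUnique
    rw [← SigmaP_eq]
    refine and_congr_right fun _ => forall₂_congr fun E I => forall₄_congr fun _ _ hE hI =>
      imp_congr_left (forall₄_congr fun ξ hξ s hs => ⟨fun h => ?_, fun h r hr => ?_⟩)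
    · exact lt_ellM hΩ hc (le_of_lt (hI hs)) (h s ⟨hI hs, le_rfl⟩) h
    · exact mem_of_lt_ellM (snd_le_of_mem_SigmaP (hE hξ)) h hr

end
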